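/- arXiv:1805.11410 — 2 statements merged into one kernel-verified Lean document; each statement's English description precedes it below -/
import Mathlib

section
/- Let x₀ > 0 and t ∈ ℂ with Re(1/(4t)) > 0. Then lim_{ε→0⁺} ∫₀^∞ exp(−x²/(4t))·(Log(x₀ − x − iε) − Log(x₀ − x + iε)) dx = −2πi·∫_{x₀}^∞ exp(−x²/(4t)) dx, where Log denotes the principal branch of the complex logarithm. -/
open MeasureTheory Filter

lemma log_jump_norm_le (x₀ x ε : ℝ) :
    ‖Complex.log ((x₀ : ℂ) - (x : ℂ) - ε * Complex.I)
            - Complex.log ((x₀ : ℂ) - (x : ℂ) + ε * Complex.I)‖ ≤ 2 * Real.pi := by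
  have hn : ‖(x₀ : ℂ) - (x : ℂ) - ε * Complex.I‖ = ‖(x₀ : ℂ) - (x : ℂ) + ε * Complex.I‖ := by
    rw [← Complex.norm_conj]
    congr 1
    simp
  have h : Complex.log ((x₀ : ℂ) - (x : ℂ) - ε * Complex.I)
            - Complex.log ((x₀ : ℂ) - (x : ℂ) + ε * Complex.I)
      = ((Complex.arg ((x₀ : ℂ) - (x : ℂ) - ε * Complex.I)
        - Complex.arg ((x₀ : ℂ) - (x : ℂ) + ε * Complex.I) : ℝ) : ℂ) * Complex.I := by
    rw [Complex.log, Complex.log, hn]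
    push_cast
    ring
  rw [h, norm_mul, Complex.norm_I, mul_one, Complex.norm_real, Real.norm_eq_abs]
  have h1 := Complex.abs_arg_le_pi ((x₀ : ℂ) - (x : ℂ) - ε * Complex.I)
  have h2 := Complex.abs_arg_le_pi ((x₀ : ℂ) - (x : ℂ) + ε * Complex.I)
  rw [abs_le] at *
  constructor <;> linarith [h1.1, h1.2, h2.1, h2.2]

lemma log_jump_tendsto (x₀ x : ℝ) (hx : x ≠ x₀) :
    Tendsto (fun ε : ℝ => Complex.log ((x₀ : ℂ) - (x : ℂ) - ε * Complex.I)
            - Complex.log ((x₀ : ℂ) - (x : ℂ) + ε * Complex.I))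
      (nhdsWithin 0 (Set.Ioi 0))
      (nhds (if x₀ < x then -2 * Real.pi * Complex.I else 0)) := by
  have c1 : Tendsto (fun ε : ℝ => (x₀ : ℂ) - (x : ℂ) - ε * Complex.I)
      (nhdsWithin 0 (Set.Ioi 0)) (nhds ((x₀ : ℂ) - x)) := by
    have : Continuous (fun ε : ℝ => (x₀ : ℂ) - (x : ℂ) - ε * Complex.I) := by fun_prop
    simpa using (this.tendsto 0).mono_left nhdsWithin_le_nhds
  have c2 : Tendsto (fun ε : ℝ => (x₀ : ℂ) - (x : ℂ) + ε * Complex.I)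
      (nhdsWithin 0 (Set.Ioi 0)) (nhds ((x₀ : ℂ) - x)) := by
    have : Continuous (fun ε : ℝ => (x₀ : ℂ) - (x : ℂ) + ε * Complex.I) := by fun_prop
    simpa using (this.tendsto 0).mono_left nhdsWithin_le_nhds
  split_ifs with h
  · have hre : ((x₀ : ℂ) - x).re < 0 := by simpa using h
    have him : ((x₀ : ℂ) - x).im = 0 := by simp
    have l1 := (Complex.tendsto_log_nhdsWithin_im_neg_of_re_neg_of_im_zero hre him).comp
      (tendsto_nhdsWithin_iff.2 ⟨c1, by
        filter_upwards [self_mem_nhdsWithin] with ε hε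
        simpa using hε⟩)
    have l2 := (Complex.tendsto_log_nhdsWithin_im_nonneg_of_re_neg_of_im_zero hre him).comp
      (tendsto_nhdsWithin_iff.2 ⟨c2, by
        filter_upwards [self_mem_nhdsWithin] with ε hε
        simpa using le_of_lt hε⟩)
    convert l1.sub l2 using 2
    · rfl
    · ring
  · have hs : ((x₀ : ℂ) - x) ∈ Complex.slitPlane := by
      left
      have : x < x₀ := lt_of_le_of_ne (not_lt.1 h) hx
      simpa using this
    simpa using (c1.clog hs).sub (c2.clog hs)

/-- paper's Example 4: branch-cut jump of the logarithmic Cauchy data against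
the Gaussian kernel:
`lim_{ε→0⁺} ∫₀^∞ e^{-x²/(4t)}·(Log(x₀-x-iε) - Log(x₀-x+iε)) dx = -2πi·∫_{x₀}^∞ e^{-x²/(4t)} dx`. -/
theorem stmt_8 (x₀ : ℝ) (hx₀ : 0 < x₀) (t : ℂ) (ht : 0 < (1 / (4 * t)).re) :
    Filter.Tendsto
      (fun ε : ℝ => ∫ x in Set.Ioi (0 : ℝ),
        Complex.exp (-(x : ℂ) ^ 2 / (4 * t)) *
          (Complex.log ((x₀ : ℂ) - (x : ℂ) - ε * Complex.I)
            - Complex.log ((x₀ : ℂ) - (x : ℂ) + ε * Complex.I)))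
      (nhdsWithin 0 (Set.Ioi 0))
      (nhds (-2 * Real.pi * Complex.I *
        ∫ x in Set.Ioi x₀, Complex.exp (-(x : ℂ) ^ 2 / (4 * t)))) := by
  have hint : Integrable (fun x : ℝ => Complex.exp (-(x : ℂ) ^ 2 / (4 * t))) := by
    convert integrable_cexp_neg_mul_sq ht using 3
    ring
  have heq : -2 * Real.pi * Complex.I *
        ∫ x in Set.Ioi x₀, Complex.exp (-(x : ℂ) ^ 2 / (4 * t))
      = ∫ x in Set.Ioi (0 : ℝ), Complex.exp (-(x : ℂ) ^ 2 / (4 * t)) *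
          (if x₀ < x then -2 * Real.pi * Complex.I else 0) := by
    have : (fun x : ℝ => Complex.exp (-(x : ℂ) ^ 2 / (4 * t)) *
          (if x₀ < x then -2 * Real.pi * Complex.I else 0))
        = (Set.Ioi x₀).indicator (fun x : ℝ => -2 * Real.pi * Complex.I *
            Complex.exp (-(x : ℂ) ^ 2 / (4 * t))) := by
      funext x
      by_cases h : x₀ < x
      · simp [Set.indicator, h, mul_comm]
      · simp [Set.indicator, h]
    rw [this, setIntegral_indicator measurableSet_Ioi, Set.Ioi_inter_Ioi,
      max_eq_right hx₀.le, integral_const_mul]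
  rw [heq]
  refine tendsto_integral_filter_of_dominated_convergence
    (fun x : ℝ => ‖Complex.exp (-(x : ℂ) ^ 2 / (4 * t))‖ * (2 * Real.pi)) ?_ ?_ ?_ ?_
  · refine Eventually.of_forall fun ε => Measurable.aestronglyMeasurable ?_
    fun_prop
  · refine Eventually.of_forall fun ε => Eventually.of_forall fun x => ?_
    rw [norm_mul]
    exact mul_le_mul_of_nonneg_left (log_jump_norm_le x₀ x ε) (norm_nonneg _)
  · exact (hint.norm.mul_const _).integrableOn
  · have hne : ∀ᵐ x : ℝ ∂(volume.restrict (Set.Ioi (0 : ℝ))), x ≠ x₀ :=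
      ae_restrict_of_ae (Measure.ae_ne volume x₀)
    filter_upwards [hne] with x hx
    exact (log_jump_tendsto x₀ x hx).const_mul _
end

section
/- Let x₀ > 0, let λ be a real number with λ > −1 and λ ∉ ℤ, and let t ∈ ℂ with Re(1/(4t)) > 0. Then lim_{ε→0⁺} ∫₀^∞ exp(−x²/(4t))·((x₀ − x − iε)^λ − (x₀ − x + iε)^λ) dx = −2i·sin(πλ)·∫_{x₀}^∞ exp(−x²/(4t))·(x − x₀)^λ dx, where w^λ denotes the principal branch of the complex power. -/
open MeasureTheory Filter

lemma aux_bound (lam : ℝ) (u e : ℝ) (hu : u ≠ 0) (he : |e| ≤ 1) :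
    ‖((u : ℂ) + (e : ℂ) * Complex.I) ^ (lam : ℂ)‖ ≤ 2 ^ |lam| * (|u| ^ lam + 1) := by
  rw [Complex.norm_cpow_real]
  have h0 : 0 < |u| := abs_pos.mpr hu
  have h1 : |u| ≤ ‖(u : ℂ) + (e : ℂ) * Complex.I‖ := by
    simpa using Complex.abs_re_le_norm ((u : ℂ) + (e : ℂ) * Complex.I)
  have h2 : ‖(u : ℂ) + (e : ℂ) * Complex.I‖ ≤ |u| + 1 := by
    refine (norm_add_le _ _).trans ?_
    simpa using he
  have hp : 0 < |u| ^ lam := Real.rpow_pos_of_pos h0 _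
  have h2' : (1 : ℝ) ≤ 2 ^ |lam| := Real.one_le_rpow (by norm_num) (abs_nonneg _)
  rcases le_or_gt 0 lam with hl | hl
  · rw [abs_of_nonneg hl]
    rcases le_total |u| 1 with h | h
    · calc _ ≤ (2 : ℝ) ^ lam := Real.rpow_le_rpow (norm_nonneg _) (by linarith) hl
        _ ≤ _ := by rw [abs_of_nonneg hl] at h2'; nlinarith
    · calc _ ≤ (2 * |u|) ^ lam := Real.rpow_le_rpow (norm_nonneg _) (by linarith) hl
        _ = 2 ^ lam * |u| ^ lam := Real.mul_rpow (by norm_num) h0.le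
        _ ≤ _ := by rw [abs_of_nonneg hl] at h2'; nlinarith
  · calc _ ≤ |u| ^ lam := Real.rpow_le_rpow_of_nonpos h0 h1 hl.le
      _ ≤ _ := by nlinarith

lemma aux_int (b : ℝ) (hb : 0 < b) (lam : ℝ) (hl : -1 < lam) :
    Integrable (fun u : ℝ => |u| ^ lam * Real.exp (-b * u ^ 2)) := by
  have h : IntegrableOn (fun u : ℝ => |u| ^ lam * Real.exp (-b * u ^ 2)) (Set.Ioi 0) := by
    refine (integrableOn_rpow_mul_exp_neg_mul_sq hb hl).congr_fun (fun u hu => ?_) measurableSet_Ioi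
    simp only [abs_of_pos (Set.mem_Ioi.mp hu)]
  rw [← integrableOn_univ, ← Set.Iio_union_Ici (a := (0 : ℝ)), integrableOn_union,
    integrableOn_Ici_iff_integrableOn_Ioi]
  refine ⟨?_, h⟩
  rw [← (Measure.measurePreserving_neg (volume : Measure ℝ)).integrableOn_comp_preimage
      (Homeomorph.neg ℝ).measurableEmbedding]
  simpa only [Function.comp_def, neg_sq, Set.neg_preimage, Set.neg_Iio, neg_zero, abs_neg] using h

lemma aux_lim (lam u s : ℝ) (hu : 0 < u) :
    Tendsto (fun e : ℝ => ((u : ℂ) + ((s * e : ℝ) : ℂ) * Complex.I) ^ (lam : ℂ))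
      (nhdsWithin 0 (Set.Ioi 0)) (nhds ((u : ℂ) ^ (lam : ℂ))) := by
  have h : Tendsto (fun e : ℝ => (u : ℂ) + ((s * e : ℝ) : ℂ) * Complex.I)
      (nhdsWithin 0 (Set.Ioi 0)) (nhds (u : ℂ)) := by
    have : Continuous (fun e : ℝ => (u : ℂ) + ((s * e : ℝ) : ℂ) * Complex.I) := by fun_prop
    simpa using (this.tendsto 0).mono_left nhdsWithin_le_nhds
  exact h.cpow tendsto_const_nhds (by simp [Complex.mem_slitPlane_iff, hu])

lemma aux_lim_neg (lam u : ℝ) (hu : 0 < u) :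
    Tendsto (fun e : ℝ => ((-u : ℝ) + ((-1 * e : ℝ) : ℂ) * Complex.I) ^ (lam : ℂ))
      (nhdsWithin 0 (Set.Ioi 0))
      (nhds (Complex.exp ((Real.log u - Real.pi * Complex.I) * lam))) ∧
    Tendsto (fun e : ℝ => ((-u : ℝ) + ((1 * e : ℝ) : ℂ) * Complex.I) ^ (lam : ℂ))
      (nhdsWithin 0 (Set.Ioi 0))
      (nhds (Complex.exp ((Real.log u + Real.pi * Complex.I) * lam))) := by
  have hne : ∀ s e : ℝ, ((-u : ℝ) + ((s * e : ℝ) : ℂ) * Complex.I) ≠ 0 := by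
    intro s e h
    have := congrArg Complex.re h
    simp at this
    exact hu.ne' this
  have h : ∀ s : ℝ, Tendsto (fun e : ℝ => ((-u : ℝ) : ℂ) + ((s * e : ℝ) : ℂ) * Complex.I)
      (nhdsWithin 0 (Set.Ioi 0)) (nhds ((-u : ℝ) : ℂ)) := by
    intro s
    have : Continuous (fun e : ℝ => ((-u : ℝ) : ℂ) + ((s * e : ℝ) : ℂ) * Complex.I) := by fun_prop
    simpa using (this.tendsto 0).mono_left nhdsWithin_le_nhds
  have hn : ‖((-u : ℝ) : ℂ)‖ = u := by simp [abs_of_pos hu]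
  constructor
  · have h1 := (Complex.tendsto_log_nhdsWithin_im_neg_of_re_neg_of_im_zero
      (z := ((-u : ℝ) : ℂ)) (by simpa using hu) (by simp)).comp
      (tendsto_nhdsWithin_iff.mpr ⟨h (-1), by
        filter_upwards [self_mem_nhdsWithin] with e he
        simpa using he⟩)
    rw [hn] at h1
    refine ((h1.mul_const (lam : ℂ)).cexp).congr fun e => ?_
    rw [Complex.cpow_def_of_ne_zero (hne _ _)]; rfl
  · have h1 := (Complex.tendsto_log_nhdsWithin_im_nonneg_of_re_neg_of_im_zero
      (z := ((-u : ℝ) : ℂ)) (by simpa using hu) (by simp)).comp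
      (tendsto_nhdsWithin_iff.mpr ⟨h 1, by
        filter_upwards [self_mem_nhdsWithin] with e he
        simpa using (le_of_lt he : (0:ℝ) ≤ e)⟩)
    rw [hn] at h1
    refine ((h1.mul_const (lam : ℂ)).cexp).congr fun e => ?_
    rw [Complex.cpow_def_of_ne_zero (hne _ _)]; rfl

lemma aux_val (lam u : ℝ) (hu : 0 < u) :
    Complex.exp ((Real.log u - Real.pi * Complex.I) * lam)
      - Complex.exp ((Real.log u + Real.pi * Complex.I) * lam)
    = -2 * Complex.I * (Real.sin (Real.pi * lam) : ℂ) * ((u ^ lam : ℝ) : ℂ) := by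
  rw [Real.rpow_def_of_pos hu]
  push_cast
  rw [Complex.sin, sub_mul, add_mul, sub_eq_add_neg (_ * _) (_ * _), Complex.exp_add, Complex.exp_add]
  have e1 : -((Real.pi : ℂ) * Complex.I * lam) = -(Real.pi * lam) * Complex.I := by ring
  have e2 : ((Real.pi : ℂ) * Complex.I * lam) = (Real.pi * lam) * Complex.I := by ring
  rw [e1, e2]
  linear_combination (Complex.exp (Real.log u * lam)) * (Complex.exp (-(Real.pi * lam) * Complex.I)
    - Complex.exp ((Real.pi * lam) * Complex.I)) * Complex.I_sq

/-- paper's Example 5: branch-cut jump of the power Cauchy data `(·)^λ`,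
`λ > -1`, `λ ∉ ℤ`, against the Gaussian kernel:
`lim_{ε→0⁺} ∫₀^∞ e^{-x²/(4t)}·((x₀-x-iε)^λ - (x₀-x+iε)^λ) dx
  = -2i·sin(πλ)·∫_{x₀}^∞ e^{-x²/(4t)}·(x-x₀)^λ dx`. -/
theorem stmt_9 (x₀ : ℝ) (hx₀ : 0 < x₀) (lam : ℝ) (hlam1 : -1 < lam)
    (hlam2 : ∀ m : ℤ, lam ≠ (m : ℝ)) (t : ℂ) (ht : 0 < (1 / (4 * t)).re) :
    Filter.Tendsto
      (fun ε : ℝ => ∫ x in Set.Ioi (0 : ℝ),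
        Complex.exp (-(x : ℂ) ^ 2 / (4 * t)) *
          (((x₀ : ℂ) - (x : ℂ) - ε * Complex.I) ^ (lam : ℂ)
            - ((x₀ : ℂ) - (x : ℂ) + ε * Complex.I) ^ (lam : ℂ)))
      (nhdsWithin 0 (Set.Ioi 0))
      (nhds (-2 * Complex.I * (Real.sin (Real.pi * lam) : ℂ) *
        ∫ x in Set.Ioi x₀,
          Complex.exp (-(x : ℂ) ^ 2 / (4 * t)) * ((x - x₀) ^ lam : ℝ))) := by
  set b := (1 / (4 * t)).re with hb
  have hz1 : ∀ x ε : ℝ, (x₀ : ℂ) - (x : ℂ) - ε * Complex.I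
      = ((x₀ - x : ℝ) : ℂ) + ((-1 * ε : ℝ) : ℂ) * Complex.I := by
    intro x ε; push_cast; ring
  have hz2 : ∀ x ε : ℝ, (x₀ : ℂ) - (x : ℂ) + ε * Complex.I
      = ((x₀ - x : ℝ) : ℂ) + ((1 * ε : ℝ) : ℂ) * Complex.I := by
    intro x ε; push_cast; ring
  have hexp : ∀ x : ℝ, ‖Complex.exp (-(x : ℂ) ^ 2 / (4 * t))‖ = Real.exp (-b * x ^ 2) := by
    intro x
    rw [Complex.norm_exp]
    congr 1
    have : -(x : ℂ) ^ 2 / (4 * t) = ((-x ^ 2 : ℝ) : ℂ) * (1 / (4 * t)) := by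
      push_cast; ring
    rw [this, Complex.re_ofReal_mul, ← hb]; ring
  have hlim : -2 * Complex.I * (Real.sin (Real.pi * lam) : ℂ) *
        (∫ x in Set.Ioi x₀,
          Complex.exp (-(x : ℂ) ^ 2 / (4 * t)) * ((x - x₀) ^ lam : ℝ))
      = ∫ x in Set.Ioi (0 : ℝ), (Set.Ioi x₀).indicator (fun x : ℝ =>
          -2 * Complex.I * (Real.sin (Real.pi * lam) : ℂ) *
          (Complex.exp (-(x : ℂ) ^ 2 / (4 * t)) * ((x - x₀) ^ lam : ℝ))) x := by
    rw [setIntegral_indicator measurableSet_Ioi,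
      Set.inter_eq_self_of_subset_right (Set.Ioi_subset_Ioi hx₀.le), integral_const_mul]
  rw [hlim]
  have hne : ∀ᵐ x : ℝ ∂(volume.restrict (Set.Ioi (0:ℝ))), x ≠ x₀ :=
    ae_restrict_of_ae (Measure.ae_ne volume x₀)
  refine tendsto_integral_filter_of_dominated_convergence
    (fun x => (2 * 2 ^ |lam| * Real.exp (b * x₀ ^ 2)) *
      (|x - x₀| ^ lam * Real.exp (-(b / 2) * (x - x₀) ^ 2)
        + Real.exp (-(b / 2) * (x - x₀) ^ 2))) ?_ ?_ ?_ ?_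
  · refine Eventually.of_forall fun ε => Measurable.aestronglyMeasurable ?_
    fun_prop
  · have : ∀ᶠ ε : ℝ in nhdsWithin 0 (Set.Ioi 0), |ε| ≤ 1 := by
      filter_upwards [Ioo_mem_nhdsGT (zero_lt_one' ℝ)] with ε hε
      rw [abs_of_pos hε.1]; exact hε.2.le
    filter_upwards [this] with ε hε
    filter_upwards [hne] with x hx
    have hu : x₀ - x ≠ 0 := sub_ne_zero.mpr (Ne.symm hx)
    rw [hz1, hz2, norm_mul, hexp]
    have b1 := aux_bound lam (x₀ - x) (-1 * ε) hu (by simpa using hε)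
    have b2 := aux_bound lam (x₀ - x) (1 * ε) hu (by simpa using hε)
    have b3 := (norm_sub_le _ _).trans (add_le_add b1 b2)
    have b4 : Real.exp (-b * x ^ 2)
        ≤ Real.exp (b * x₀ ^ 2) * Real.exp (-(b / 2) * (x - x₀) ^ 2) := by
      rw [← Real.exp_add]
      apply Real.exp_le_exp.mpr
      nlinarith [mul_nonneg ht.le (sq_nonneg (x + x₀))]
    refine (mul_le_mul b4 b3 (norm_nonneg _) (by positivity)).trans (le_of_eq ?_)
    rw [abs_sub_comm x₀ x]; ring
  · have i1 := (aux_int (b / 2) (by positivity) lam hlam1).comp_sub_right x₀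
    have i2 := (integrable_exp_neg_mul_sq (b := b / 2) (by positivity)).comp_sub_right x₀
    exact ((i1.add i2).const_mul _).integrableOn
  · filter_upwards [hne] with x hx
    simp only [hz1, hz2]
    rcases lt_or_gt_of_ne hx with h | h
    · rw [Set.indicator_of_notMem (by simpa using h.le)]
      have := ((aux_lim lam (x₀ - x) (-1) (by linarith)).sub
        (aux_lim lam (x₀ - x) 1 (by linarith))).const_mul (Complex.exp (-(x : ℂ) ^ 2 / (4 * t)))
      simpa only [sub_self, mul_zero] using this
    · rw [Set.indicator_of_mem (by simpa using h)]
      obtain ⟨l1, l2⟩ := aux_lim_neg lam (x - x₀) (by linarith)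
      have := (l1.sub l2).const_mul (Complex.exp (-(x : ℂ) ^ 2 / (4 * t)))
      rw [aux_val lam _ (by linarith), neg_sub, mul_left_comm] at this
      exact this
end
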